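/- Let v ∈ L^∞(ℝ²) ∩ C(ℝ²) be a solution (in the distributional sense) of −Δv = 2 v(1, θ) δ_{|y|=1}, i.e. ∫ ∇v·∇φ = 2∫_{|y|=1} v φ for all φ ∈ C_c^∞(ℝ²). Then v lies in the span of ∂w/∂y₁ and ∂w/∂y₂, where w(y) = (1−|y|²)/4 for |y| ≤ 1 and w(y) = (1/2)ln(1/|y|) for |y| > 1. -/

import Mathlib

open Real Metric MeasureTheory

noncomputable abbrev E2 := EuclideanSpace ℝ (Fin 2)

/-- The Laplacian in two variables. -/
noncomputable def lap (f : E2 → ℝ) (x : E2) : ℝ :=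
  ∑ i : Fin 2,
    fderiv ℝ (fun z => fderiv ℝ f z (EuclideanSpace.single i 1)) x (EuclideanSpace.single i 1)

/-- `∂w/∂y_i` for the radial profile `w`: `−y_i/2` for `|y| ≤ 1` and `−y_i/(2|y|²)` else. -/
noncomputable def dw (i : Fin 2) (y : E2) : ℝ :=
  if ‖y‖ ≤ 1 then -(y i) / 2 else -(y i) / (2 * ‖y‖ ^ 2)

/-
Identify the plane with `ℂ` and use the conformal coordinate `z = exp (t + iθ)`, in which the unit
circle is `t = 0`. Testing the equation against `ζ (t) r ^ n e^{inθ}`, where `ζ` is constant near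
`-∞` and vanishes near `+∞`, isolates the angular Fourier coefficient `A_n` of the solution: with
`η = e^{2nt} ζ'` one gets `∫ η' e^{-nt} A_n = 2 A_n(0) ∫_{t > 0} e^{-2nt} η`, so the du Bois-Reymond
lemma yields `A_n(t) = e^{nt} (1 - 2 ∫_0^{max t 0} e^{-2nτ} dτ) A_n(0)`. For `n = 1` the factor is
`e^{-|t|}`, while for `n ≠ 1` it is unbounded as `t → ∞`, which forces `A_n = 0`. A bounded solution
thus has only the angular modes `±1`, with radial factor `e^{-|log r|} = r / max 1 r²`; these are
exactly the combinations of the two partial derivatives of `w`.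
-/

open Set Filter Topology Function Complex InnerProductSpace Laplacian
open scoped ENNReal NNReal ContDiff ComplexConjugate Interval Convolution

section HausdorffMeasure

theorem hausdorffMeasure_le_image_of_antilipschitz_domRestrict {X Y : Type*}
    [MetricSpace X] [MeasurableSpace X] [BorelSpace X]
    [MetricSpace Y] [MeasurableSpace Y] [BorelSpace Y] {f : X → Y} {K : ℝ≥0} {d : ℝ}
    (hd : 0 ≤ d) {u : Set X} (hu : AntilipschitzWith K (u.domRestrict f)) :
    μH[d] u ≤ (K : ℝ≥0∞) ^ d * μH[d] (f '' u) := by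
  have h := hu.le_hausdorffMeasure_image hd univ
  rwa [← isometry_subtype_coe.hausdorffMeasure_image (Or.inl hd), image_univ, image_univ,
    Subtype.range_coe, range_domRestrict] at h

theorem exists_measurable_partition_of_mem_nhds {X : Type*} [TopologicalSpace X]
    [SecondCountableTopology X] [MeasurableSpace X] [OpensMeasurableSpace X] {u : X → Set X}
    (hu : ∀ x, u x ∈ 𝓝 x) :
    ∃ t : ℕ → Set X, (∀ k, MeasurableSet (t k)) ∧ Pairwise (Disjoint on t) ∧ ⋃ k, t k = univ ∧
      ∀ k, (t k).Nonempty → ∃ x, t k ⊆ u x := by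
  rcases isEmpty_or_nonempty X with hX | hX
  · exact ⟨fun _ => ∅, by simp, by simp [Pairwise], Subsingleton.elim _ _, by simp⟩
  obtain ⟨c, hc, hcover⟩ :=
    TopologicalSpace.countable_cover_nhds fun x => interior_mem_nhds.2 (hu x)
  have hc0 : c.Nonempty := by
    by_contra! h
    simp [h, empty_ne_univ] at hcover
  obtain ⟨x, rfl⟩ := hc.exists_eq_range hc0
  refine ⟨disjointed fun k => interior (u (x k)),
    .disjointed fun k => isOpen_interior.measurableSet, disjoint_disjointed _, ?_,
    fun k _ => ⟨x k, (disjointed_subset _ k).trans interior_subset⟩⟩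
  rw [iUnion_disjointed, ← biUnion_range (g := fun x => interior (u x)), hcover]

theorem hausdorffMeasure_le_image_of_locally_antilipschitz {X Y : Type*}
    [MetricSpace X] [PolishSpace X] [MeasurableSpace X] [BorelSpace X]
    [MetricSpace Y] [MeasurableSpace Y] [BorelSpace Y] {f : X → Y} {K : ℝ≥0} {d : ℝ}
    (hd : 0 ≤ d) (hf : Continuous f)
    (hloc : ∀ x, ∃ u ∈ 𝓝 x, AntilipschitzWith K (u.domRestrict f))
    {s : Set X} (hs : MeasurableSet s) (hinj : InjOn f s) :
    μH[d] s ≤ (K : ℝ≥0∞) ^ d * μH[d] (f '' s) := by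
  choose u hu hanti using hloc
  obtain ⟨t, ht, hdisj, hcover, hsub⟩ := exists_measurable_partition_of_mem_nhds hu
  have hs' (k : ℕ) : MeasurableSet (s ∩ t k) := hs.inter (ht k)
  have hsU : s = ⋃ k, s ∩ t k := by rw [← inter_iUnion, hcover, inter_univ]
  have hpiece (k : ℕ) : μH[d] (s ∩ t k) ≤ (K : ℝ≥0∞) ^ d * μH[d] (f '' (s ∩ t k)) := by
    rcases (s ∩ t k).eq_empty_or_nonempty with h | ⟨y, -, hy⟩
    · simp [h]
    obtain ⟨x, hx⟩ := hsub k ⟨y, hy⟩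
    have hst : s ∩ t k ⊆ u x := inter_subset_right.trans hx
    exact hausdorffMeasure_le_image_of_antilipschitz_domRestrict hd fun a b =>
      hanti x (inclusion hst a) (inclusion hst b)
  calc μH[d] s ≤ ∑' k, μH[d] (s ∩ t k) := by
        conv_lhs => rw [hsU]
        exact measure_iUnion_le _
    _ ≤ ∑' k, (K : ℝ≥0∞) ^ d * μH[d] (f '' (s ∩ t k)) := ENNReal.tsum_le_tsum hpiece
    _ = (K : ℝ≥0∞) ^ d * μH[d] (f '' s) := by
        rw [ENNReal.tsum_mul_left, ← measure_iUnion, ← image_iUnion, ← hsU]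
        · exact fun i j hij => disjoint_iff_inter_eq_empty.2 <| by
            rw [← hinj.image_inter inter_subset_left inter_subset_left,
              ((hdisj hij).mono inter_subset_right inter_subset_right).inter_eq, image_empty]
        · exact fun k => (hs' k).image_of_continuousOn_injOn hf.continuousOn
            (hinj.mono inter_subset_left)

variable {E : Type*} [NormedAddCommGroup E] [NormedSpace ℝ E] {γ γ' : ℝ → E}

theorem exists_antilipschitz_of_hasStrictDerivAt {t : ℝ} {v : E}
    (hγ : HasStrictDerivAt γ v t) (hv : ‖v‖ = 1) {K : ℝ≥0} (hK : 1 < K) :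
    ∃ u ∈ 𝓝 t, AntilipschitzWith K (u.domRestrict γ) := by
  have hc : 0 < 1 - (K : ℝ)⁻¹ := sub_pos.2 (inv_lt_one_of_one_lt₀ (mod_cast hK))
  obtain ⟨u, hu, hγu⟩ := HasStrictFDerivAt.approximates_deriv_on_nhds
    hγ.hasStrictFDerivAt (c := ⟨1 - (K : ℝ)⁻¹, hc.le⟩) (Or.inr hc)
  refine ⟨u, hu, AntilipschitzWith.of_le_mul_dist fun a b => ?_⟩
  have happ : ‖γ a - γ b - ((a : ℝ) - b) • v‖ ≤ (1 - (K : ℝ)⁻¹) * dist a b :=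
    hγu a a.2 b b.2
  have htri : dist a b ≤ ‖γ a - γ b‖ + ‖γ a - γ b - ((a : ℝ) - b) • v‖ := by
    have := norm_le_insert (γ a - γ b) (((a : ℝ) - b) • v)
    rwa [norm_smul, hv, mul_one] at this
  rw [← div_le_iff₀' (by positivity), domRestrict_apply, domRestrict_apply, dist_eq_norm (γ a),
    div_eq_mul_inv]
  linarith

variable [MeasurableSpace E] [BorelSpace E]

theorem hausdorffMeasure_image_of_unit_speed (hγ : ∀ t, HasStrictDerivAt γ (γ' t) t)
    (hγ' : ∀ t, ‖γ' t‖ = 1) {s : Set ℝ} (hs : MeasurableSet s) (hinj : InjOn γ s) :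
    μH[1] (γ '' s) = volume s := by
  have hlip : LipschitzWith 1 γ := lipschitzWith_of_nnnorm_deriv_le
    (fun t => (hγ t).hasDerivAt.differentiableAt) fun t => by
      rw [(hγ t).hasDerivAt.deriv]; exact (hγ' t).le
  have hanti {K : ℝ≥0} (hK : 1 < K) : volume s ≤ K * μH[1] (γ '' s) := by
    simpa only [hausdorffMeasure_real, ENNReal.rpow_one] using
      hausdorffMeasure_le_image_of_locally_antilipschitz zero_le_one hlip.continuous
        (fun t => exists_antilipschitz_of_hasStrictDerivAt (hγ t) (hγ' t) hK) hs hinj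
  refine le_antisymm ?_ ?_
  · simpa [hausdorffMeasure_real] using hlip.hausdorffMeasure_image_le zero_le_one s
  · have hlim : Tendsto (fun K : ℝ≥0 => (K : ℝ≥0∞) * μH[1] (γ '' s)) (𝓝[>] 1)
        (𝓝 (1 * μH[1] (γ '' s))) :=
      ENNReal.Tendsto.mul_const (ENNReal.tendsto_coe.2 (tendsto_id.mono_left nhdsWithin_le_nhds))
        (Or.inl one_ne_zero)
    rw [one_mul] at hlim
    exact ge_of_tendsto hlim (eventually_mem_nhdsWithin.mono fun K hK => hanti hK)

theorem hausdorffMeasure_restrict_image_of_unit_speed (hγ : ∀ t, HasStrictDerivAt γ (γ' t) t)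
    (hγ' : ∀ t, ‖γ' t‖ = 1) {s : Set ℝ} (hs : MeasurableSet s) (hinj : InjOn γ s) :
    μH[1].restrict (γ '' s) = (volume.restrict s).map γ := by
  have hcont : Continuous γ := continuous_iff_continuousAt.2 fun t => (hγ t).hasDerivAt.continuousAt
  ext A hA
  rw [Measure.restrict_apply hA, Measure.map_apply hcont.measurable hA,
    Measure.restrict_apply (hcont.measurable hA), inter_comm A, inter_comm _ s,
    ← image_inter_preimage,
    hausdorffMeasure_image_of_unit_speed hγ hγ' (hs.inter (hcont.measurable hA))
      (hinj.mono inter_subset_left)]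

theorem setIntegral_sphere_hausdorffMeasure {F : Type*} [NormedAddCommGroup F] [NormedSpace ℝ F]
    {f : ℂ → F} (hf : Continuous f) :
    ∫ z in sphere (0 : ℂ) 1, f z ∂μH[1] = ∫ θ in -π..π, f (circleMap 0 1 θ) := by
  have himage : circleMap 0 1 '' Ioc (-π) π = sphere (0 : ℂ) 1 := by
    have hper := (periodic_circleMap 0 1).image_Ioc two_pi_pos (-π)
    rwa [range_circleMap, abs_one, show -π + 2 * π = π by ring] at hper
  have hinj : InjOn (circleMap 0 1) (Ioc (-π) π) := by
    have hΙ : Ι (-π) π = Ioc (-π) π := uIoc_of_le (by linarith [pi_pos])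
    exact hΙ ▸ injOn_circleMap_of_abs_sub_le one_ne_zero (by
      rw [abs_sub_comm, sub_neg_eq_add, ← two_mul, abs_of_pos two_pi_pos])
  have hderiv (θ : ℝ) : HasStrictDerivAt (circleMap 0 1) (circleMap 0 1 θ * I) θ :=
    (contDiff_circleMap 0 1 (n := 1)).contDiffAt.hasStrictDerivAt'
      (hasDerivAt_circleMap 0 1 θ) one_ne_zero
  rw [← himage, hausdorffMeasure_restrict_image_of_unit_speed hderiv (by simp) measurableSet_Ioc
    hinj, integral_map (continuous_circleMap 0 1).aemeasurable hf.aestronglyMeasurable,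
    intervalIntegral.integral_of_le (by linarith [pi_pos])]

end HausdorffMeasure

section LogPolar

theorem slitPlane_ae_eq_univ : slitPlane =ᵐ[volume] univ :=
  volume_preserving_equiv_real_prod.quasiMeasurePreserving.preimage_ae_eq
    polarCoord_source_ae_eq_univ

theorem det_smul_one_eq_norm_sq (z : ℂ) : (z • (1 : ℂ →L[ℝ] ℂ)).det = ‖z‖ ^ 2 := by
  have h : ((z • (1 : ℂ →L[ℝ] ℂ) : ℂ →L[ℝ] ℂ) : ℂ →ₗ[ℝ] ℂ) = LinearMap.mulLeft ℝ z := by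
    ext
    simp
  rw [ContinuousLinearMap.det, h, ← normSq_eq_norm_sq]
  exact DFunLike.congr_fun Algebra.norm_complex_eq z

variable {F : Type*} [NormedAddCommGroup F] [NormedSpace ℝ F]

theorem abs_det_cexp_smul_one (w : ℂ) :
    |(cexp w • (1 : ℂ →L[ℝ] ℂ)).det| = Real.exp (2 * w.re) := by
  rw [det_smul_one_eq_norm_sq, abs_sq, Complex.norm_exp, ← Real.exp_nat_mul,
    Nat.cast_ofNat]

theorem integral_comp_cexp (f : ℂ → F) :
    ∫ w in {w | w.im ∈ Ioo (-π) π}, Real.exp (2 * w.re) • f (cexp w) = ∫ z, f z := by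
  have h := integral_image_eq_integral_abs_det_fderiv_smul volume
    expOpenPartialHomeomorph.open_source.measurableSet
    (fun w _ => (Complex.hasDerivAt_exp w).complexToReal_fderiv.hasFDerivWithinAt)
    expOpenPartialHomeomorph.injOn f
  simp only [abs_det_cexp_smul_one] at h
  have himage : cexp '' expOpenPartialHomeomorph.source = slitPlane :=
    expOpenPartialHomeomorph.image_source_eq_target
  rw [himage, setIntegral_congr_set slitPlane_ae_eq_univ, setIntegral_univ] at h
  exact h.symm

theorem integrableOn_comp_cexp {f : ℂ → F} (hf : Integrable f) :
    IntegrableOn (fun w => Real.exp (2 * w.re) • f (cexp w)) {w | w.im ∈ Ioo (-π) π} := by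
  have h := (integrableOn_image_iff_integrableOn_abs_det_fderiv_smul volume
    expOpenPartialHomeomorph.open_source.measurableSet
    (fun w _ => (Complex.hasDerivAt_exp w).complexToReal_fderiv.hasFDerivWithinAt)
    expOpenPartialHomeomorph.injOn f).1
      hf.integrableOn
  simp only [abs_det_cexp_smul_one] at h
  exact h

theorem integral_eq_integral_log_polar {f : ℂ → F} (hf : Integrable f) :
    ∫ z, f z = ∫ t : ℝ, ∫ θ in -π..π, Real.exp (2 * t) • f (cexp (t + θ * I)) := by
  let e := measurableEquivRealProd.symm
  have he : MeasurePreserving e := volume_preserving_equiv_real_prod.symm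
  have hpre : e ⁻¹' {w | w.im ∈ Ioo (-π) π} = univ ×ˢ Ioo (-π) π := by
    ext p
    simp [e, measurableEquivRealProd_symm_apply]
  have hint := (he.integrableOn_comp_preimage e.measurableEmbedding).2 (integrableOn_comp_cexp hf)
  rw [hpre] at hint
  simp only [comp_def] at hint
  rw [← integral_comp_cexp, ← he.setIntegral_preimage_emb e.measurableEmbedding, hpre,
    Measure.volume_eq_prod, setIntegral_prod _ hint, setIntegral_univ]
  simp only [intervalIntegral.integral_of_le (neg_le_self pi_pos.le),
    integral_Ioc_eq_integral_Ioo, e, measurableEquivRealProd_symm_apply, ← mk_eq_add_mul_I]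

end LogPolar

section Laplacian

theorem laplacian_eq_sum_fderiv_fderiv {E F ι : Type*} [NormedAddCommGroup E]
    [InnerProductSpace ℝ E] [FiniteDimensional ℝ E] [NormedAddCommGroup F] [NormedSpace ℝ F]
    [Fintype ι] (b : OrthonormalBasis ι ℝ E) {f : E → F} {x : E} (hf : ContDiffAt ℝ 2 f x) :
    Δ f x = ∑ i, fderiv ℝ (fun y => fderiv ℝ f y (b i)) x (b i) := by
  have hf' : DifferentiableAt ℝ (fderiv ℝ f) x :=
    (hf.fderiv_right (m := 1) le_rfl).differentiableAt one_ne_zero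
  simp [laplacian_eq_iteratedFDeriv_orthonormalBasis f b, iteratedFDeriv_two_apply,
    fderiv_clm_apply hf' (differentiableAt_const _)]

theorem laplacian_comp_linearIsometryEquiv {E F G : Type*} [NormedAddCommGroup E]
    [InnerProductSpace ℝ E] [FiniteDimensional ℝ E] [NormedAddCommGroup F]
    [InnerProductSpace ℝ F] [FiniteDimensional ℝ F] [NormedAddCommGroup G] [NormedSpace ℝ G]
    (e : E ≃ₗᵢ[ℝ] F) (f : F → G) (x : E) : Δ (f ∘ e) x = Δ f (e x) := by
  let b := stdOrthonormalBasis ℝ E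
  have hsnd : iteratedFDeriv ℝ 2 (f ∘ e) x =
      (iteratedFDeriv ℝ 2 f (e x)).compContinuousLinearMap
        fun _ => (e.toContinuousLinearEquiv : E →L[ℝ] F) := by
    have := e.toContinuousLinearEquiv.iteratedFDerivWithin_comp_right f uniqueDiffOn_univ
      (mem_univ (e x)) 2
    simp only [iteratedFDerivWithin_univ, preimage_univ] at this
    exact this
  simp only [laplacian_eq_iteratedFDeriv_orthonormalBasis _ b,
    laplacian_eq_iteratedFDeriv_orthonormalBasis _ (b.map e), hsnd,
    ContinuousMultilinearMap.compContinuousLinearMap_apply]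
  refine Finset.sum_congr rfl fun i _ => congrArg _ (funext fun j => ?_)
  fin_cases j <;> simp

theorem continuous_laplacian {E F : Type*} [NormedAddCommGroup E] [InnerProductSpace ℝ E]
    [FiniteDimensional ℝ E] [NormedAddCommGroup F] [NormedSpace ℝ F] {f : E → F}
    (hf : ContDiff ℝ 2 f) : Continuous (Δ f) := by
  rw [laplacian_eq_iteratedFDeriv_stdOrthonormalBasis]
  exact continuous_finsetSum _ fun i _ =>
    (continuous_eval_const _).comp (hf.continuous_iteratedFDeriv le_rfl)

theorem hasCompactSupport_laplacian {E F : Type*} [NormedAddCommGroup E] [InnerProductSpace ℝ E]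
    [FiniteDimensional ℝ E] [NormedAddCommGroup F] [NormedSpace ℝ F] {f : E → F}
    (hf : HasCompactSupport f) : HasCompactSupport (Δ f) :=
  (hf.iteratedFDeriv (𝕜 := ℝ) 2).mono fun x hx h0 => hx <| by
    simp [laplacian_eq_iteratedFDeriv_stdOrthonormalBasis, h0]

variable {F : Type*} [NormedAddCommGroup F] [NormedSpace ℝ F]

theorem laplacian_complex_eq_fderiv_fderiv {f : ℂ → F} {z : ℂ} (hf : ContDiffAt ℝ 2 f z) :
    Δ f z = fderiv ℝ (fun w => fderiv ℝ f w 1) z 1 + fderiv ℝ (fun w => fderiv ℝ f w I) z I := by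
  rw [laplacian_eq_sum_fderiv_fderiv Complex.orthonormalBasisOneI hf]
  simp

theorem apply_self_add_apply_mul_I_self (B : ℂ →L[ℝ] ℂ →L[ℝ] F) (c : ℂ) :
    B c c + B (c * I) (c * I) = ‖c‖ ^ 2 • (B 1 1 + B I I) := by
  have hc : c = c.re • (1 : ℂ) + c.im • I := by simp
  have hcI : c * I = c.re • I - c.im • (1 : ℂ) := by
    apply Complex.ext <;> simp
  have hnorm : ‖c‖ ^ 2 = c.re * c.re + c.im * c.im := by rw [← normSq_eq_norm_sq, normSq_apply]
  rw [hcI, hnorm]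
  generalize c.re = x, c.im = y at *
  simp only [hc, map_add, map_sub, map_smul, add_apply,
    sub_apply, smul_apply]
  module

theorem laplacian_comp_analyticAt {f : ℂ → F} {h : ℂ → ℂ} {z : ℂ}
    (hf : ContDiffAt ℝ 2 f (h z)) (hh : AnalyticAt ℂ h z) :
    Δ (f ∘ h) z = ‖deriv h z‖ ^ 2 • Δ f (h z) := by
  have hf' : DifferentiableAt ℝ (fderiv ℝ f) (h z) :=
    (hf.fderiv_right (m := 1) le_rfl).differentiableAt one_ne_zero
  have hhR := hh.differentiableAt.hasDerivAt.complexToReal_fderiv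
  have hfirst (v : ℂ) : (fun w => fderiv ℝ (f ∘ h) w v) =ᶠ[𝓝 z]
      fun w => fderiv ℝ f (h w) (deriv h w * v) := by
    have hfev := hh.continuousAt.eventually <|
      (hf.eventually (by simp)).mono fun w hw => hw.differentiableAt two_ne_zero
    filter_upwards [hfev, hh.eventually_analyticAt] with w hfw hhw
    rw [(hfw.hasFDerivAt.comp w hhw.differentiableAt.hasDerivAt.complexToReal_fderiv).fderiv]
    simp
  have hsecond (v : ℂ) : fderiv ℝ (fun w => fderiv ℝ (f ∘ h) w v) z v =
      fderiv ℝ (fderiv ℝ f) (h z) (deriv h z * v) (deriv h z * v) +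
        fderiv ℝ f (h z) (deriv (deriv h) z * v * v) := by
    have hh' := (hh.deriv.differentiableAt.hasDerivAt.mul_const v).complexToReal_fderiv
    rw [(hfirst v).fderiv_eq]
    refine (congrArg (· v) ((hf'.hasFDerivAt.comp z hhR).clm_apply hh').fderiv).trans ?_
    simp [mul_comm, add_comm]
  have hfh : ContDiffAt ℝ 2 (f ∘ h) z := hf.comp z (hh.contDiffAt.restrict_scalars ℝ)
  rw [laplacian_complex_eq_fderiv_fderiv hfh, laplacian_eq_iteratedFDeriv_complexPlane, hsecond,
    hsecond]
  have hII (c : ℂ) : c * I * I = -c := by rw [mul_assoc, I_mul_I, mul_neg_one]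
  simp only [iteratedFDeriv_two_apply, mul_one, hII, map_neg]
  rw [add_add_add_comm, add_neg_cancel, add_zero, apply_self_add_apply_mul_I_self]
  rfl

end Laplacian

section AngularMode

/-- The function `r e^{iθ} ↦ ζ (log r) r ^ n e^{inθ}` with value `c * 0 ^ n` at the origin; it is
a test function when `ζ` is smooth, equal to `c` near `-∞` and to `0` near `+∞`. -/
noncomputable def angularMode (ζ : ℝ → ℂ) (c : ℂ) (n : ℕ) (z : ℂ) : ℂ :=
  (if z = 0 then c else ζ (Real.log ‖z‖)) * z ^ n

variable {ζ : ℝ → ℂ} {c : ℂ} {n : ℕ}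

theorem angularMode_cexp (ζ : ℝ → ℂ) (c : ℂ) (n : ℕ) (w : ℂ) :
    angularMode ζ c n (cexp w) = ζ w.re * cexp (n * w) := by
  simp [angularMode, Complex.norm_exp, Complex.exp_nat_mul]

theorem contDiff_angularMode {m : WithTop ℕ∞} (hζ : ContDiff ℝ m ζ)
    (hc : ∀ᶠ t in atBot, ζ t = c) : ContDiff ℝ m (angularMode ζ c n) := by
  refine ContDiff.mul (contDiff_iff_contDiffAt.2 fun z => ?_) (contDiff_id.pow n)
  rcases eq_or_ne z 0 with rfl | hz
  · refine (contDiffAt_const (c := c)).congr_of_eventuallyEq ?_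
    have hlog := (tendsto_log_nhdsGT_zero.comp (tendsto_norm_nhdsNE_zero (E := ℂ))).eventually hc
    rw [eventually_nhdsWithin_iff] at hlog
    filter_upwards [hlog] with z hz
    split_ifs with h
    · rfl
    · exact hz h
  · have hlog := (contDiffAt_norm (n := m) ℂ hz).log (norm_ne_zero_iff.2 hz)
    refine (hζ.contDiffAt.comp z hlog).congr_of_eventuallyEq ?_
    filter_upwards [isOpen_ne.mem_nhds hz] with w hw
    simp [if_neg hw]

theorem hasCompactSupport_angularMode (hζ : ∀ᶠ t in atTop, ζ t = 0) :
    HasCompactSupport (angularMode ζ c n) := by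
  obtain ⟨R, hR⟩ := eventually_atTop.1 hζ
  refine HasCompactSupport.intro (isCompact_closedBall 0 (Real.exp R)) fun z hz => ?_
  have hRz : Real.exp R < ‖z‖ := by simpa using hz
  have hz0 : 0 < ‖z‖ := (Real.exp_pos R).trans hRz
  simp [angularMode, norm_pos_iff.1 hz0, hR _ ((Real.le_log_iff_exp_le hz0).2 hRz.le)]

theorem fderiv_comp_re_mul_cexp {w : ℂ} (hζ : DifferentiableAt ℝ ζ w.re) (v : ℂ) :
    fderiv ℝ (fun w => ζ w.re * cexp (n * w)) w v =
      (v.re * deriv ζ w.re + n * v * ζ w.re) * cexp (n * w) := by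
  have hre : HasFDerivAt (fun w : ℂ => ζ w.re) (reCLM.smulRight (deriv ζ w.re)) w :=
    hζ.hasDerivAt.hasFDerivAt.comp w reCLM.hasFDerivAt
  have hexp : HasFDerivAt (fun w : ℂ => cexp (n * w)) _ w :=
    ((hasDerivAt_id w).const_mul (n : ℂ)).cexp.hasFDerivAt.restrictScalars ℝ
  refine (congrArg (· v) (hre.mul hexp).fderiv).trans ?_
  simp only [id_eq, mul_one, add_apply, smul_apply, ContinuousLinearMap.coe_restrictScalars',
    ContinuousLinearMap.toSpanSingleton_apply, smul_eq_mul, ContinuousLinearMap.smulRight_apply,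
    reCLM_apply, real_smul]
  ring

theorem laplacian_comp_re_mul_cexp (hζ : ContDiff ℝ 2 ζ) (w : ℂ) :
    Δ (fun w : ℂ => ζ w.re * cexp (n * w)) w =
      (deriv (deriv ζ) w.re + 2 * n * deriv ζ w.re) * cexp (n * w) := by
  have hd : Differentiable ℝ ζ := hζ.differentiable two_ne_zero
  have hd' : Differentiable ℝ (deriv ζ) := (hζ.deriv' (n := 1)).differentiable one_ne_zero
  have hmode : ContDiff ℝ 2 fun w : ℂ => ζ w.re * cexp (n * w) :=
    (hζ.comp reCLM.contDiff).mul (contDiff_const.mul contDiff_id).cexp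
  let ζ₁ : ℝ → ℂ := fun t => deriv ζ t + n * ζ t
  let ζ₂ : ℝ → ℂ := fun t => n * I * ζ t
  have hζ₁ (t : ℝ) : HasDerivAt ζ₁ (deriv (deriv ζ) t + n * deriv ζ t) t :=
    (hd' t).hasDerivAt.add ((hd t).hasDerivAt.const_mul _)
  have hζ₂ (t : ℝ) : HasDerivAt ζ₂ (n * I * deriv ζ t) t := (hd t).hasDerivAt.const_mul _
  have hone : (fun w => fderiv ℝ (fun w : ℂ => ζ w.re * cexp (n * w)) w 1) =
      fun w => ζ₁ w.re * cexp (n * w) := by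
    ext w
    simp [fderiv_comp_re_mul_cexp (hd w.re), ζ₁]
  have hI : (fun w => fderiv ℝ (fun w : ℂ => ζ w.re * cexp (n * w)) w I) =
      fun w => ζ₂ w.re * cexp (n * w) := by
    ext w
    simp [fderiv_comp_re_mul_cexp (hd w.re), ζ₂]
  rw [laplacian_complex_eq_fderiv_fderiv hmode.contDiffAt, hone, hI,
    fderiv_comp_re_mul_cexp (hζ₁ w.re).differentiableAt,
    fderiv_comp_re_mul_cexp (hζ₂ w.re).differentiableAt, (hζ₁ w.re).deriv, (hζ₂ w.re).deriv,
    one_re, I_re, ofReal_one, ofReal_zero]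
  linear_combination (n ^ 2 * ζ w.re * cexp (n * w)) * I_sq

theorem exp_smul_laplacian_angularMode (hζ : ContDiff ℝ 2 ζ) (hc : ∀ᶠ t in atBot, ζ t = c) (w : ℂ) :
    Real.exp (2 * w.re) • Δ (angularMode ζ c n) (cexp w) =
      (deriv (deriv ζ) w.re + 2 * n * deriv ζ w.re) * cexp (n * w) := by
  have hcomp : angularMode ζ c n ∘ cexp = fun w => ζ w.re * cexp (n * w) :=
    funext (angularMode_cexp ζ c n)
  rw [← laplacian_comp_re_mul_cexp hζ, ← hcomp,
    laplacian_comp_analyticAt (contDiff_angularMode hζ hc).contDiffAt analyticAt_cexp,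
    Complex.deriv_exp, Complex.norm_exp, ← Real.exp_nat_mul, Nat.cast_ofNat]

end AngularMode

section Antiderivative

theorem exists_antideriv_of_hasCompactSupport {E : Type*} [NormedAddCommGroup E] [NormedSpace ℝ E]
    [CompleteSpace E] {g : ℝ → E} (hg : ContDiff ℝ ∞ g) (hsupp : HasCompactSupport g) :
    ∃ (ζ : ℝ → E) (c : E), ContDiff ℝ ∞ ζ ∧ deriv ζ = g ∧ (∀ᶠ t in atBot, ζ t = c) ∧
      (∀ᶠ t in atTop, ζ t = 0) ∧ ζ 0 = -∫ t in Ioi 0, g t := by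
  obtain ⟨R, hR0, hR⟩ := hsupp.isCompact.isBounded.subset_ball_lt 0 0
  have hzero {t : ℝ} (ht : R ≤ |t|) : g t = 0 :=
    notMem_support.1 fun h => ht.not_gt (by simpa using hR (subset_tsupport g h))
  have integral_eq_zero {a b : ℝ} (h : ∀ t ∈ uIcc a b, g t = 0) : ∫ t in a..b, g t = 0 := by
    rw [intervalIntegral.integral_congr h, intervalIntegral.integral_zero]
  have hderiv (t : ℝ) : HasDerivAt (fun t => ∫ τ in R..t, g τ) (g t) t :=
    hg.continuous.integral_hasStrictDerivAt _ t |>.hasDerivAt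
  refine ⟨fun t => ∫ τ in R..t, g τ, ∫ τ in R..-R, g τ, ?_, ?_, ?_, ?_, ?_⟩
  · refine contDiff_infty_iff_deriv.2 ⟨fun t => (hderiv t).differentiableAt, ?_⟩
    rwa [funext fun t => (hderiv t).deriv]
  · exact funext fun t => (hderiv t).deriv
  · filter_upwards [Iic_mem_atBot (-R)] with t ht
    rw [← intervalIntegral.integral_add_adjacent_intervals (b := -R)
      (hg.continuous.intervalIntegrable _ _) (hg.continuous.intervalIntegrable _ _),
      integral_eq_zero (b := t) fun τ hτ => ?_, add_zero]
    rw [uIcc_of_ge ht] at hτ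
    exact hzero (le_abs.2 (.inr (by linarith [hτ.2])))
  · filter_upwards [Ici_mem_atTop R] with t ht
    refine integral_eq_zero fun τ hτ => hzero ?_
    rw [uIcc_of_le ht] at hτ
    exact le_abs.2 (.inl hτ.1)
  · beta_reduce
    rw [intervalIntegral.integral_symm, intervalIntegral.integral_of_le hR0.le,
      setIntegral_eq_of_subset_of_forall_sdiff_eq_zero measurableSet_Ioi Ioc_subset_Ioi_self
        fun t ht => hzero (le_abs.2 (.inl (not_lt.1 fun h => ht.2 ⟨ht.1, h.le⟩)))]

end Antiderivative

section WeakSolution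

/-- `u` is a distributional solution of `-Δu = 2u δ_{|z|=1}` on the complex plane. The integral over
the unit circle is taken by arc length, and test functions are complex-valued. -/
def IsWeakSolution (u : ℂ → ℝ) : Prop :=
  ∀ φ : ℂ → ℂ, ContDiff ℝ ∞ φ → HasCompactSupport φ →
    -(∫ z, u z * Δ φ z) = 2 * ∫ θ in -π..π, u (circleMap 0 1 θ) * φ (circleMap 0 1 θ)

/-- The Fourier coefficient of `u` on the circle of radius `e ^ t` against `e ^ (inθ)` (the mode
`-n` in the usual sign convention) and without the factor `1 / 2π`. -/
noncomputable def angularCoeff (u : ℂ → ℝ) (n : ℕ) (t : ℝ) : ℂ :=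
  ∫ θ in -π..π, u (cexp (t + θ * I)) * cexp (n * (θ * I))

variable {u : ℂ → ℝ} {ζ : ℝ → ℂ} {c : ℂ}

theorem continuous_angularCoeff (hu : Continuous u) (n : ℕ) : Continuous (angularCoeff u n) := by
  unfold angularCoeff
  fun_prop

theorem norm_angularCoeff_le {C : ℝ} (hC : ∀ z, |u z| ≤ C) (n : ℕ) (t : ℝ) :
    ‖angularCoeff u n t‖ ≤ 2 * π * C := by
  have h := intervalIntegral.norm_integral_le_of_norm_le_const (a := -π) (b := π) (C := C)
    (f := fun θ : ℝ => u (cexp (t + θ * I)) * cexp (n * (θ * I))) fun θ _ => by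
      simpa [Complex.norm_exp] using hC _
  rwa [sub_neg_eq_add, ← two_mul, abs_of_pos two_pi_pos, mul_comm] at h

theorem IsWeakSolution.integral_angularCoeff (hu : IsWeakSolution u) (hcont : Continuous u)
    (hζ : ContDiff ℝ ∞ ζ) (hc : ∀ᶠ t in atBot, ζ t = c) (h0 : ∀ᶠ t in atTop, ζ t = 0) (n : ℕ) :
    -∫ t, (deriv (deriv ζ) t + 2 * n * deriv ζ t) * cexp (n * t) * angularCoeff u n t =
      2 * (ζ 0 * angularCoeff u n 0) := by
  have hζ2 : ContDiff ℝ 2 ζ := contDiff_infty.1 hζ 2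
  have hint : Integrable fun z => u z * Δ (angularMode ζ c n) z :=
    Continuous.integrable_of_hasCompactSupport
      ((continuous_ofReal.comp hcont).mul (continuous_laplacian (contDiff_angularMode hζ2 hc)))
      (hasCompactSupport_laplacian (hasCompactSupport_angularMode h0)).mul_left
  have hcircle : ∫ θ in -π..π, u (circleMap 0 1 θ) * angularMode ζ c n (circleMap 0 1 θ) =
      ζ 0 * angularCoeff u n 0 := by
    rw [angularCoeff, ← intervalIntegral.integral_const_mul]
    refine intervalIntegral.integral_congr fun θ _ => ?_
    simp only [circleMap_zero, ofReal_one, one_mul, angularMode_cexp, re_ofReal_mul, I_re, mul_zero,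
      ofReal_zero, zero_add]
    ring
  rw [← hcircle, ← hu _ (contDiff_angularMode hζ hc) (hasCompactSupport_angularMode h0),
    integral_eq_integral_log_polar hint]
  congr 2
  ext t
  rw [angularCoeff, ← intervalIntegral.integral_const_mul]
  refine intervalIntegral.integral_congr fun θ _ => ?_
  have hre : ((t : ℂ) + θ * I).re = t := by simp
  have hΔ := exp_smul_laplacian_angularMode (n := n) hζ2 hc (t + θ * I)
  simp only [hre, mul_add, Complex.exp_add] at hΔ ⊢
  rw [← mul_smul_comm, hΔ]
  ring

theorem IsWeakSolution.integral_deriv_smul_angularCoeff (hu : IsWeakSolution u)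
    (hcont : Continuous u) {η : ℝ → ℝ} (hη : ContDiff ℝ ∞ η) (hsupp : HasCompactSupport η) (n : ℕ) :
    ∫ t, deriv η t • (cexp (-n * t) * angularCoeff u n t) =
      2 * angularCoeff u n 0 * ∫ t : ℝ in Ioi 0, η t • cexp (-(2 * n * t)) := by
  let g : ℝ → ℂ := fun t => η t • cexp (-(2 * n * t))
  have hη' (t : ℝ) : HasDerivAt η (deriv η t) t := (hη.differentiable (by simp) t).hasDerivAt
  have hg : ContDiff ℝ ∞ g :=
    hη.smul (contDiff_const.mul ofRealCLM.contDiff).neg.cexp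
  have hgsupp : HasCompactSupport g := hsupp.smul_right
  have hg' (t : ℝ) : deriv g t = cexp (-(2 * n * t)) * (deriv η t - 2 * n * η t) := by
    have hexp : HasDerivAt (fun t : ℝ => cexp (-(2 * n * t))) _ t :=
      ((hasDerivAt_id (t : ℂ)).const_mul (2 * n : ℂ)).neg.cexp.comp_ofReal
    refine ((hη' t).smul hexp).deriv.trans ?_
    simp only [id_eq, Pi.neg_apply, mul_one, mul_neg, smul_neg, real_smul]
    ring
  obtain ⟨ζ, c, hζ, hζ', hc, h0, hζ0⟩ := exists_antideriv_of_hasCompactSupport hg hgsupp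
  have hweak := hu.integral_angularCoeff hcont hζ hc h0 n
  have hLHS (t : ℝ) : (deriv (deriv ζ) t + 2 * n * deriv ζ t) * cexp (n * t) * angularCoeff u n t =
      deriv η t • (cexp (-n * t) * angularCoeff u n t) := by
    have hexp : cexp (-(2 * n * t)) * cexp (n * t) = cexp (-n * t) := by
      rw [← Complex.exp_add]
      ring_nf
    rw [hζ', hg', ← hexp]
    simp only [g, real_smul]
    ring
  simp only [hLHS, hζ0] at hweak
  linear_combination -hweak

end WeakSolution

section Transport

theorem lap_eq_laplacian {f : E2 → ℝ} (hf : ContDiff ℝ 2 f) : lap f = Δ f := by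
  ext x
  rw [laplacian_eq_sum_fderiv_fderiv (EuclideanSpace.basisFun (Fin 2) ℝ) hf.contDiffAt]
  simp only [lap, EuclideanSpace.basisFun_apply]

theorem isWeakSolution_of_forall_real {u : ℂ → ℝ} (hu : Continuous u)
    (h : ∀ φ : ℂ → ℝ, ContDiff ℝ ∞ φ → HasCompactSupport φ →
      -(∫ z, u z * Δ φ z) = 2 * ∫ θ in -π..π, u (circleMap 0 1 θ) * φ (circleMap 0 1 θ)) :
    IsWeakSolution u := by
  intro φ hφ hsupp
  have hφ2 : ContDiff ℝ 2 φ := contDiff_infty.1 hφ 2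
  have hvol : Integrable fun z => u z * Δ φ z :=
    Continuous.integrable_of_hasCompactSupport
      ((continuous_ofReal.comp hu).mul (continuous_laplacian hφ2))
      (hasCompactSupport_laplacian hsupp).mul_left
  have hcircle : IntervalIntegrable (fun θ => u (circleMap 0 1 θ) * φ (circleMap 0 1 θ))
      volume (-π) π := by
    have := hφ.continuous
    exact Continuous.intervalIntegrable (by fun_prop) _ _
  have key (L : ℂ →L[ℝ] ℝ) : L (-∫ z, u z * Δ φ z) =
      L (2 * ∫ θ in -π..π, u (circleMap 0 1 θ) * φ (circleMap 0 1 θ)) := by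
    have hL (a : ℝ) (b : ℂ) : L (a * b) = a * L b := by rw [← real_smul, map_smul, smul_eq_mul]
    have hΔ (z : ℂ) : L (Δ φ z) = Δ (L ∘ φ) z := hφ2.contDiffAt.laplacian_CLM_comp_left.symm
    rw [map_neg, ← L.integral_comp_comm hvol, ← ofReal_ofNat, hL,
      ← L.intervalIntegral_comp_comm hcircle]
    simp only [hL, hΔ]
    exact h _ (L.contDiff.comp hφ) (hsupp.comp_left (map_zero L))
  exact Complex.ext (key reCLM) (key imCLM)

theorem setIntegral_sphere_comp_linearIsometryEquiv {E F G : Type*} [NormedAddCommGroup E]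
    [NormedSpace ℝ E] [MeasurableSpace E] [BorelSpace E] [NormedAddCommGroup F]
    [NormedSpace ℝ F] [MeasurableSpace F] [BorelSpace F] [NormedAddCommGroup G] [NormedSpace ℝ G]
    (e : E ≃ₗᵢ[ℝ] F) (f : F → G) (d r : ℝ) :
    ∫ x in sphere (0 : E) r, f (e x) ∂μH[d] = ∫ y in sphere (0 : F) r, f y ∂μH[d] := by
  rw [← (e.toIsometryEquiv.measurePreserving_hausdorffMeasure d).setIntegral_preimage_emb
    e.toHomeomorph.measurableEmbedding]
  simp

theorem isWeakSolution_comp_repr {v : E2 → ℝ} (hcont : Continuous v)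
    (hweak : ∀ φ : E2 → ℝ, ContDiff ℝ ∞ φ → HasCompactSupport φ →
      -(∫ y, v y * lap φ y) = 2 * ∫ y in sphere (0 : E2) 1, v y * φ y ∂μH[1]) :
    IsWeakSolution (v ∘ Complex.orthonormalBasisOneI.repr) := by
  set e := Complex.orthonormalBasisOneI.repr
  refine isWeakSolution_of_forall_real (hcont.comp e.continuous) fun φ hφ hsupp => ?_
  have hψ : ContDiff ℝ ∞ (φ ∘ e.symm) := hφ.comp e.symm.contDiff
  have hlap (z : ℂ) : lap (φ ∘ e.symm) (e z) = Δ φ z := by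
    rw [lap_eq_laplacian (contDiff_infty.1 hψ 2), laplacian_comp_linearIsometryEquiv,
      e.symm_apply_apply]
  have h := hweak _ hψ (hsupp.comp_homeomorph e.symm.toHomeomorph)
  rw [← e.measurePreserving.integral_comp e.toHomeomorph.measurableEmbedding,
    ← setIntegral_sphere_comp_linearIsometryEquiv e] at h
  simp only [hlap, comp_apply, e.symm_apply_apply] at h
  exact h.trans (congrArg _ (setIntegral_sphere_hausdorffMeasure
    ((hcont.comp e.continuous).mul hφ.continuous)))

end Transport

section DuBoisReymond

variable {E : Type*} [NormedAddCommGroup E] [NormedSpace ℝ E] [CompleteSpace E]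

theorem eq_of_forall_integral_deriv_smul_eq_zero {F : ℝ → E} (hF : Continuous F)
    (h : ∀ η : ℝ → ℝ, ContDiff ℝ ∞ η → HasCompactSupport η → ∫ t, deriv η t • F t = 0)
    (s t : ℝ) : F s = F t := by
  let ρ (k : ℕ) : ContDiffBump (0 : ℝ) :=
    ⟨1 / (k + 2), 1 / (k + 1), by positivity, by gcongr; norm_num⟩
  have hρ : Tendsto (fun k => (ρ k).rOut) atTop (𝓝 0) := tendsto_one_div_add_atTop_nhds_zero_nat
  have hsmooth (k : ℕ) : ContDiff ℝ ∞ ((ρ k).normed volume) := (ρ k).contDiff_normed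
  have hderiv (k : ℕ) (x : ℝ) :
      HasDerivAt ((ρ k).normed volume ⋆[ContinuousLinearMap.lsmul ℝ ℝ] F) 0 x := by
    have hx := h (fun τ => (ρ k).normed volume (x - τ))
      ((hsmooth k).comp (contDiff_const.sub contDiff_id))
      ((ρ k).hasCompactSupport_normed.comp_homeomorph (Homeomorph.subLeft x))
    have hconv := (ρ k).hasCompactSupport_normed.hasDerivAt_convolution_left
      (ContinuousLinearMap.lsmul ℝ ℝ) (contDiff_infty.1 (hsmooth k) 1)
      (hF.locallyIntegrable (μ := volume)) x
    simp only [deriv_comp_const_sub, neg_smul, integral_neg, neg_eq_zero] at hx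
    rwa [convolution_lsmul_swap, hx] at hconv
  have hconst (k : ℕ) := is_const_of_deriv_eq_zero (fun x => (hderiv k x).differentiableAt)
    (fun x => (hderiv k x).deriv) s t
  have hs := ContDiffBump.convolution_tendsto_right_of_continuous (μ := volume) hρ hF s
  simp only [hconst] at hs
  exact tendsto_nhds_unique hs
    (ContDiffBump.convolution_tendsto_right_of_continuous (μ := volume) hρ hF t)

theorem setIntegral_Ioi_smul_eq_neg_integral_deriv_smul {η : ℝ → ℝ} {q : ℝ → E}
    (hη : ContDiff ℝ 1 η) (hsupp : HasCompactSupport η) (hq : Continuous q) (a : ℝ) :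
    ∫ t in Ioi a, η t • q t = -∫ t, deriv η t • ∫ τ in a..max t a, q τ := by
  let Q (t : ℝ) : E := ∫ τ in a..t, q τ
  have hQ' (t : ℝ) : HasDerivAt Q (q t) t := (hq.integral_hasStrictDerivAt a t).hasDerivAt
  have hQ : ContDiff ℝ 1 Q := contDiff_one_iff_deriv.2
    ⟨fun t => (hQ' t).differentiableAt, by rwa [funext fun t => (hQ' t).deriv]⟩
  have hderiv (t : ℝ) : deriv (fun t => η t • Q t) t = η t • q t + deriv η t • Q t :=
    ((hη.differentiable one_ne_zero t).hasDerivAt.smul (hQ' t)).deriv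
  have hη'Q : Integrable fun t => deriv η t • Q t :=
    ((hη.continuous_deriv le_rfl).smul hQ.continuous).integrable_of_hasCompactSupport
      hsupp.deriv.smul_right
  have hηq : Integrable fun t => η t • q t :=
    (hη.continuous.smul hq).integrable_of_hasCompactSupport hsupp.smul_right
  have hparts := (hsupp.smul_right (f' := Q)).integral_Ioi_deriv_eq (hη.smul hQ) a
  have hcut (t : ℝ) : deriv η t • Q (max t a) = (Ioi a).indicator (fun t => deriv η t • Q t) t := by
    rcases le_or_gt t a with ht | ht
    · simp [ht, Q]
    · simp [ht, ht.le]
  change _ = -∫ t, deriv η t • Q (max t a)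
  simp only [Pi.smul_def', hderiv, hcut] at hparts ⊢
  rw [integral_add hηq.integrableOn hη'Q.integrableOn] at hparts
  rw [integral_indicator measurableSet_Ioi, eq_neg_iff_add_eq_zero, hparts]
  simp [Q]

end DuBoisReymond

section Profile

variable {u : ℂ → ℝ}

/-- The factor by which the `n`-th Fourier coefficient of a weak solution on the circle of radius
`e ^ t` differs from the one on the unit circle. -/
noncomputable def angularProfile (n : ℕ) (t : ℝ) : ℝ :=
  Real.exp (n * t) * (1 - 2 * ∫ τ in 0..max t 0, Real.exp (-(2 * n * τ)))

theorem angularProfile_of_nonneg {n : ℕ} (hn : n ≠ 0) {t : ℝ} (ht : 0 ≤ t) :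
    angularProfile n t = (1 - 1 / n) * Real.exp (n * t) + 1 / n * Real.exp (-(n * t)) := by
  have hint : ∫ τ in 0..t, Real.exp (-(2 * n * τ)) = (1 - Real.exp (-(2 * n * t))) / (2 * n) := by
    simp_rw [← neg_mul]
    rw [intervalIntegral.integral_comp_mul_left _ (by simpa), integral_exp]
    simp only [neg_mul, inv_neg, mul_inv_rev, mul_zero, Real.exp_zero, smul_eq_mul]
    ring
  have hexp : Real.exp (n * t) * Real.exp (-(2 * n * t)) = Real.exp (-(n * t)) := by
    rw [← Real.exp_add]
    ring_nf
  rw [angularProfile, max_eq_left ht, hint, ← hexp]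
  field_simp
  ring

theorem angularProfile_one (t : ℝ) : angularProfile 1 t = Real.exp (-|t|) := by
  rcases le_total t 0 with ht | ht
  · simp [angularProfile, max_eq_right ht, abs_of_nonpos ht]
  · simp [angularProfile_of_nonneg one_ne_zero ht, abs_of_nonneg ht]

theorem tendsto_abs_angularProfile {n : ℕ} (hn : n ≠ 1) :
    Tendsto (fun t => |angularProfile n t|) atTop atTop := by
  rcases Nat.eq_zero_or_pos n with rfl | hn0
  · have hbot : Tendsto (fun t : ℝ => 2 * t - 1) atTop atTop :=
      tendsto_atTop_add_const_right _ _ (tendsto_id.const_mul_atTop two_pos)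
    refine tendsto_atTop_mono' _ ?_ hbot
    filter_upwards [eventually_ge_atTop 0] with t ht
    rw [← neg_sub]
    simpa [angularProfile, ht] using neg_le_abs (1 - 2 * t)
  · have hcoef : 0 < 1 - 1 / (n : ℝ) := by
      rw [sub_pos, div_lt_one (by positivity)]
      exact_mod_cast (show 1 < n by lia)
    have hexp : Tendsto (fun t : ℝ => (1 - 1 / (n : ℝ)) * Real.exp (n * t)) atTop atTop :=
      (Real.tendsto_exp_atTop.comp
        (tendsto_id.const_mul_atTop (by positivity))).const_mul_atTop hcoef
    refine tendsto_atTop_mono' _ ?_ hexp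
    filter_upwards [eventually_ge_atTop 0] with t ht
    rw [angularProfile_of_nonneg hn0.ne' ht]
    refine le_trans ?_ (le_abs_self _)
    simp only [le_add_iff_nonneg_right]
    positivity

theorem IsWeakSolution.exp_mul_angularCoeff_add (hu : IsWeakSolution u) (hcont : Continuous u)
    (n : ℕ) (t : ℝ) :
    cexp (-n * t) * angularCoeff u n t +
      2 * angularCoeff u n 0 * ∫ τ in 0..max t 0, cexp (-(2 * n * τ)) = angularCoeff u n 0 := by
  have hA := continuous_angularCoeff hcont n
  have hq : Continuous fun τ : ℝ => cexp (-(2 * n * τ)) := by fun_prop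
  have hQ : Continuous fun t : ℝ => ∫ τ in 0..max t 0, cexp (-(2 * n * τ)) :=
    (intervalIntegral.continuous_primitive (fun _ _ => hq.intervalIntegrable _ _) 0).comp
      (continuous_id.max continuous_const)
  have hG : Continuous fun t : ℝ => cexp (-n * t) * angularCoeff u n t +
      2 * angularCoeff u n 0 * ∫ τ in 0..max t 0, cexp (-(2 * n * τ)) := by fun_prop
  refine (eq_of_forall_integral_deriv_smul_eq_zero hG (fun η hη hsupp => ?_) t 0).trans (by simp)
  have hint {f : ℝ → ℂ} (hf : Continuous f) : Integrable fun t => deriv η t • f t :=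
    ((hη.continuous_deriv (by simp)).smul hf).integrable_of_hasCompactSupport hsupp.deriv.smul_right
  have hparts :=
    setIntegral_Ioi_smul_eq_neg_integral_deriv_smul (contDiff_infty.1 hη 1) hsupp hq 0
  simp only [smul_add, ← mul_smul_comm _ (2 * angularCoeff u n 0)]
  rw [integral_add (hint (by fun_prop)) ((hint hQ).const_mul _), integral_const_mul,
    hu.integral_deriv_smul_angularCoeff hcont hη hsupp, hparts]
  ring

theorem IsWeakSolution.angularCoeff_eq (hu : IsWeakSolution u) (hcont : Continuous u) (n : ℕ)
    (t : ℝ) : angularCoeff u n t = angularProfile n t * angularCoeff u n 0 := by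
  have hint : ((∫ τ in 0..max t 0, Real.exp (-(2 * n * τ)) : ℝ) : ℂ) =
      ∫ τ in 0..max t 0, cexp (-(2 * n * τ)) := by
    rw [← intervalIntegral.integral_ofReal]
    simp
  have hexp : cexp (n * t) * cexp (-n * t) = 1 := by
    rw [← Complex.exp_add]
    simp
  rw [angularProfile, ofReal_mul, ofReal_sub, ofReal_mul, hint]
  push_cast
  linear_combination
    cexp (n * t) * hu.exp_mul_angularCoeff_add hcont n t - angularCoeff u n t * hexp

theorem IsWeakSolution.angularCoeff_eq_zero (hu : IsWeakSolution u) (hcont : Continuous u) {C : ℝ}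
    (hC : ∀ z, |u z| ≤ C) {n : ℕ} (hn : n ≠ 1) (t : ℝ) : angularCoeff u n t = 0 := by
  suffices angularCoeff u n 0 = 0 by rw [hu.angularCoeff_eq hcont, this, mul_zero]
  by_contra h
  obtain ⟨t, ht⟩ := (((tendsto_abs_angularProfile hn).atTop_mul_const
    (norm_pos_iff.2 h)).eventually_gt_atTop (2 * π * C)).exists
  have hle := norm_angularCoeff_le hC n t
  rw [hu.angularCoeff_eq hcont, norm_mul, norm_real, Real.norm_eq_abs] at hle
  exact ht.not_ge hle

end Profile

section Fourier

variable {u : ℂ → ℝ}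

theorem eq_sum_fourier_of_forall_notMem_eq_zero {f : ℝ → ℂ} (hf : Continuous f)
    (hper : Periodic f (2 * π)) (S : Finset ℤ)
    (h : ∀ k ∉ S, ∫ φ in -π..π, f φ * cexp (-k * (φ * I)) = 0) (θ : ℝ) :
    f θ = (2 * π : ℂ)⁻¹ *
      ∑ k ∈ S, (∫ φ in -π..π, f φ * cexp (-k * (φ * I))) * cexp (k * (θ * I)) := by
  have : Fact (0 < 2 * π) := ⟨two_pi_pos⟩
  let F : C(AddCircle (2 * π), ℂ) := ⟨hper.lift, hf.quotient_lift _⟩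
  have hF (φ : ℝ) : F φ = f φ := rfl
  have hfourier (k : ℤ) (φ : ℝ) :
      fourier k (φ : AddCircle (2 * π)) = cexp (k * (φ * I)) := by
    rw [fourier_coe_apply]
    congr 1
    push_cast
    field_simp
  have hcoeff (k : ℤ) : fourierCoeff F k =
      (2 * π : ℂ)⁻¹ * ∫ φ in -π..π, f φ * cexp (-k * (φ * I)) := by
    rw [fourierCoeff_eq_intervalIntegral F k (-π), show -π + 2 * π = π by ring, real_smul]
    simp [hfourier, hF, mul_comm]
  have hzero (k : ℤ) (hk : k ∉ S) : fourierCoeff F k = 0 := by rw [hcoeff, h k hk, mul_zero]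
  have hsum := has_pointwise_sum_fourier_series_of_summable (summable_of_ne_finset_zero hzero)
    (θ : AddCircle (2 * π))
  have hfin := hsum.unique (hasSum_sum_of_ne_finset_zero fun k hk => by rw [hzero k hk, zero_smul])
  simpa only [hF, hcoeff, hfourier, smul_eq_mul, mul_assoc, ← Finset.mul_sum] using hfin

theorem integral_mul_cexp_neg_eq_conj_angularCoeff (u : ℂ → ℝ) (n : ℕ) (t : ℝ) :
    ∫ θ in -π..π, u (cexp (t + θ * I)) * cexp (-n * (θ * I)) = conj (angularCoeff u n t) := by
  have hle : -π ≤ π := neg_le_self pi_nonneg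
  rw [angularCoeff, intervalIntegral.integral_of_le hle, intervalIntegral.integral_of_le hle,
    ← integral_conj]
  simp [← Complex.exp_conj]

theorem IsWeakSolution.integral_mul_cexp_eq_zero (hu : IsWeakSolution u) (hcont : Continuous u)
    {C : ℝ} (hC : ∀ z, |u z| ≤ C) {k : ℤ} (hk : k ∉ ({1, -1} : Finset ℤ)) (t : ℝ) :
    ∫ θ in -π..π, u (cexp (t + θ * I)) * cexp (-k * (θ * I)) = 0 := by
  simp only [Finset.mem_insert, Finset.mem_singleton, not_or] at hk
  obtain ⟨n, rfl | rfl⟩ := k.eq_nat_or_neg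
  · have hn : n ≠ 1 := mod_cast hk.1
    simpa [hu.angularCoeff_eq_zero hcont hC hn] using
      integral_mul_cexp_neg_eq_conj_angularCoeff u n t
  · have hn : n ≠ 1 := fun hn => hk.2 (by simp [hn])
    simpa [angularCoeff] using hu.angularCoeff_eq_zero hcont hC hn t

theorem IsWeakSolution.apply_cexp (hu : IsWeakSolution u) (hcont : Continuous u) {C : ℝ}
    (hC : ∀ z, |u z| ≤ C) (t θ : ℝ) :
    u (cexp (t + θ * I)) = Real.exp (-|t|) / π * (angularCoeff u 1 0 * cexp (-(θ * I))).re := by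
  have hper : Periodic (fun θ : ℝ => (u (cexp (t + θ * I)) : ℂ)) (2 * π) := fun θ => by
    simp [add_mul, ← add_assoc, Complex.exp_periodic _]
  have hone : ∫ φ in -π..π, u (cexp (t + φ * I)) * cexp (-(1 : ℤ) * (φ * I)) =
      Real.exp (-|t|) * conj (angularCoeff u 1 0) := by
    simpa [hu.angularCoeff_eq hcont 1 t, angularProfile_one, ← Complex.exp_conj] using
      integral_mul_cexp_neg_eq_conj_angularCoeff u 1 t
  have hneg : ∫ φ in -π..π, u (cexp (t + φ * I)) * cexp (-(-1 : ℤ) * (φ * I)) =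
      Real.exp (-|t|) * angularCoeff u 1 0 := by
    simpa [angularCoeff, angularProfile_one] using hu.angularCoeff_eq hcont 1 t
  have hconj : conj (cexp (-(θ * I))) = cexp (θ * I) := by simp [← Complex.exp_conj]
  apply ofReal_injective
  rw [eq_sum_fourier_of_forall_notMem_eq_zero (by fun_prop) hper _
      (fun _ hk => hu.integral_mul_cexp_eq_zero hcont hC hk t) θ,
    Finset.sum_pair (by decide), hone, hneg, ofReal_mul, re_eq_add_conj, map_mul, hconj]
  push_cast
  field_simp
  ring_nf

end Fourier

section Conclusion

variable {u : ℂ → ℝ}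

theorem dw_eq (i : Fin 2) (y : E2) : dw i y = -(y i) / (2 * max 1 (‖y‖ ^ 2)) := by
  rcases le_or_gt ‖y‖ 1 with h | h
  · rw [dw, if_pos h, max_eq_left (pow_le_one₀ (norm_nonneg y) h), mul_one]
  · rw [dw, if_neg h.not_ge, max_eq_right (one_le_pow₀ h.le)]

theorem exp_neg_abs_log {r : ℝ} (hr : 0 < r) : Real.exp (-|Real.log r|) = r / max 1 (r ^ 2) := by
  rcases le_total r 1 with h | h
  · rw [abs_of_nonpos (Real.log_nonpos hr.le h), neg_neg, Real.exp_log hr,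
      max_eq_left (pow_le_one₀ hr.le h), div_one]
  · rw [abs_of_nonneg (Real.log_nonneg h), Real.exp_neg, Real.exp_log hr,
      max_eq_right (one_le_pow₀ h), sq, div_self_mul_self']

theorem IsWeakSolution.apply_of_ne_zero (hu : IsWeakSolution u) (hcont : Continuous u) {C : ℝ}
    (hC : ∀ z, |u z| ≤ C) {z : ℂ} (hz : z ≠ 0) :
    u z = (angularCoeff u 1 0 * conj z).re / (π * max 1 (‖z‖ ^ 2)) := by
  have hr : 0 < ‖z‖ := norm_pos_iff.2 hz
  have hpolar : cexp (Real.log ‖z‖ + arg z * I) = z := by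
    rw [Complex.exp_add, ← ofReal_exp, Real.exp_log hr, norm_mul_exp_arg_mul_I]
  have hconj : conj z = ‖z‖ * cexp (-(arg z * I)) := by
    nth_rw 1 [← norm_mul_exp_arg_mul_I z]
    rw [map_mul, conj_ofReal, ← Complex.exp_conj]
    simp
  have h := hu.apply_cexp hcont hC (Real.log ‖z‖) (arg z)
  rw [hpolar, exp_neg_abs_log hr] at h
  rw [h, hconj, mul_left_comm, re_ofReal_mul]
  field_simp

theorem IsWeakSolution.apply_eq (hu : IsWeakSolution u) (hcont : Continuous u) {C : ℝ}
    (hC : ∀ z, |u z| ≤ C) (z : ℂ) :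
    u z = (angularCoeff u 1 0 * conj z).re / (π * max 1 (‖z‖ ^ 2)) := by
  refine congr_fun (hcont.ext_on (dense_compl_singleton 0) ?_
    fun z hz => hu.apply_of_ne_zero hcont hC hz) z
  have (z : ℂ) : π * max 1 (‖z‖ ^ 2) ≠ 0 := by positivity
  fun_prop (disch := assumption)

end Conclusion

/-- nondegeneracy of the linearized vortex patch operator:
any bounded continuous distributional solution of `−Δv = 2 v δ_{|y|=1}` is a linear
combination of `∂w/∂y₁` and `∂w/∂y₂`. -/
theorem stmt12 (v : E2 → ℝ) (hbdd : ∃ C : ℝ, ∀ y, |v y| ≤ C) (hcont : Continuous v)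
    (hweak : ∀ φ : E2 → ℝ, ContDiff ℝ (⊤ : ℕ∞) φ → HasCompactSupport φ →
      -(∫ y, v y * lap φ y) = 2 * ∫ y in sphere (0 : E2) 1, v y * φ y ∂μH[1]) :
    ∃ c₁ c₂ : ℝ, ∀ y, v y = c₁ * dw 0 y + c₂ * dw 1 y := by
  obtain ⟨C, hC⟩ := hbdd
  set e := Complex.orthonormalBasisOneI.repr
  have hu : IsWeakSolution (v ∘ e) := isWeakSolution_comp_repr hcont hweak
  set A := angularCoeff (v ∘ e) 1 0
  refine ⟨-(2 * A.re / π), -(2 * A.im / π), fun y => ?_⟩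
  have hv := hu.apply_eq (hcont.comp e.continuous) (fun z => hC (e z)) (e.symm y)
  have hre : (e.symm y).re = y 0 := by simp [e]
  have him : (e.symm y).im = y 1 := by simp [e]
  rw [comp_apply, e.apply_symm_apply, e.symm.norm_map, mul_re, conj_re, conj_im, hre, him] at hv
  rw [hv, dw_eq, dw_eq]
  field_simp
  ring
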